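/- arXiv:2604.25872 — 2 statements merged into one kernel-verified Lean document; each statement's English description precedes it below -/
import Mathlib

section
/- Suppose the ground truth reward r_G satisfies the reward structure assumption and the feature vectors satisfy the negative-inner-product feature assumption. Fix y_bad ∈ Y_bad and assume: (i) π_{θ_0}(y_med) > π_{θ_0}(y) for all y ≠ y_med; (ii) π_{θ_0}(y_⋆) ≤ Δ2 · π_{θ_0}(Y_bad) / Δ1; (iii) θ_0 = C · (φ(y_bad) − φ(y_⋆)) for some C > max{0, −ln(ζ)/‖φ(y_bad) − φ(y_⋆)‖²}, where ζ := [(ln π_{θ_0}(y_med) − ln π_{θ_0}(y_bad)) / (ln π_{θ_0}(y_med) − ln π_{θ_0}(y_⋆))] · [(V_G(θ_0) − r_G(y_bad)) / (r_G(y_⋆) − V_G(θ_0))] > 0. If θ_t is the gradient flow maximizing V_G, then V_G(θ_t) < r_G(y_med) for all t ≥ 0. -/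
open scoped BigOperators RealInnerProductSpace

noncomputable def policy {Y : Type*} [Fintype Y] {D : ℕ}
    (φ : Y → EuclideanSpace ℝ (Fin D)) (θ : EuclideanSpace ℝ (Fin D)) (y : Y) : ℝ :=
  Real.exp ⟪φ y, θ⟫ / ∑ z, Real.exp ⟪φ z, θ⟫

noncomputable def expReward {Y : Type*} [Fintype Y] {D : ℕ}
    (φ : Y → EuclideanSpace ℝ (Fin D)) (r : Y → ℝ) (θ : EuclideanSpace ℝ (Fin D)) : ℝ :=
  ∑ y, policy φ θ y * r y

/-!
Let `V` be the expected reward and weight the advantage of an output by its probability: `A y = π(y)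
(r(y) - V)`. These weights sum to zero and are negative on bad outputs, so `A ystar < -A ybad`
forces `A ymed > 0`, that is `V < r(ymed)`, and it suffices to keep the ratio `ρ = A ystar / -A
ybad` below one. Since `⟪φ ystar, φ ymed⟫ < 0`, the output `ymed` pushes the logit of `ystar` down,
and once `ρ < (-s - ‖φ ybad‖²) / (-s + ‖φ ystar‖²)`, where `s = ⟪φ ystar, φ ymed⟫`, this push
outweighs everything else: the odds of `ystar` against `ybad` decrease. As `V` increases along the
flow, `(r(ystar) - V) / (V - r(ybad))` decreases too, so `ρ` can never climb back above its initial
value.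
-/

open scoped Gradient

section GradientFlow

variable {F : Type*} [NormedAddCommGroup F] [InnerProductSpace ℝ F] [CompleteSpace F]

/-- A gradient ascent flow of `f` on the time interval `[0, ∞)`; the derivative at time `0` is
two-sided. -/
def IsGradientFlow (f : F → ℝ) (θ : ℝ → F) : Prop :=
  ∀ t : ℝ, 0 ≤ t → HasDerivAt θ (∇ f (θ t)) t

variable {f : F → ℝ} {θ : ℝ → F} {t : ℝ}

theorem IsGradientFlow.hasDerivAt_comp (hθ : IsGradientFlow f θ) (ht : 0 ≤ t)
    (hf : DifferentiableAt ℝ f (θ t)) :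
    HasDerivAt (fun u => f (θ u)) (‖∇ f (θ t)‖ ^ 2) t := by
  have h := hf.hasGradientAt.hasFDerivAt.comp_hasDerivAt t (hθ t ht)
  rwa [InnerProductSpace.toDual_apply_apply, real_inner_self_eq_norm_sq] at h

theorem IsGradientFlow.hasDerivAt_inner (hθ : IsGradientFlow f θ) (ht : 0 ≤ t) (v : F) :
    HasDerivAt (fun u => ⟪v, θ u⟫) ⟪v, ∇ f (θ t)⟫ t :=
  (innerSL ℝ v).hasFDerivAt.comp_hasDerivAt t (hθ t ht)

theorem IsGradientFlow.monotoneOn (hθ : IsGradientFlow f θ) (hf : Differentiable ℝ f) :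
    MonotoneOn (fun u => f (θ u)) (Set.Ici 0) := by
  have hderiv : ∀ u ∈ Set.Ici (0 : ℝ), HasDerivAt (fun u => f (θ u)) (‖∇ f (θ u)‖ ^ 2) u :=
    fun u hu => hθ.hasDerivAt_comp hu (hf _)
  exact monotoneOn_of_hasDerivWithinAt_nonneg (convex_Ici 0)
    (fun u hu => (hderiv u hu).continuousAt.continuousWithinAt)
    (fun u hu => (hderiv u (interior_subset hu)).hasDerivWithinAt) (fun _ _ => sq_nonneg _)

end GradientFlow

theorem inner_sub_smul_sub {F : Type*} [NormedAddCommGroup F] [InnerProductSpace ℝ F]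
    {u v w : F} (C : ℝ) (hwu : ⟪w, u⟫ = 0) (hwv : ⟪w, v⟫ = 0) :
    ⟪v - w, C • (w - u)⟫ = C * (-⟪u, v⟫ - ‖w‖ ^ 2) := by
  rw [inner_smul_right, inner_sub_left, inner_sub_right, inner_sub_right, hwu,
    real_inner_comm w v, hwv, real_inner_comm u v, real_inner_self_eq_norm_sq]
  ring

theorem le_initial_of_hasDerivAt_neg {g g' : ℝ → ℝ} (hg : ∀ t, 0 ≤ t → HasDerivAt g (g' t) t)
    (hneg : ∀ t, 0 ≤ t → g t = g 0 → g' t < 0) {t : ℝ} (ht : 0 ≤ t) : g t ≤ g 0 :=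
  image_le_of_deriv_right_lt_deriv_boundary (B := fun _ => g 0) (B' := fun _ => 0)
    (fun u hu => (hg u hu.1).continuousAt.continuousWithinAt)
    (fun u hu => (hg u hu.1).hasDerivWithinAt) le_rfl (fun u => hasDerivAt_const u (g 0))
    (fun u hu => hneg u hu.1) ⟨ht, le_rfl⟩

section Policy

variable {Y : Type*} [Fintype Y] {D : ℕ} (φ : Y → EuclideanSpace ℝ (Fin D)) (r : Y → ℝ)
  (θ : EuclideanSpace ℝ (Fin D))

theorem sum_exp_inner_pos [Nonempty Y] : 0 < ∑ z, Real.exp ⟪φ z, θ⟫ :=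
  Finset.sum_pos (fun _ _ => Real.exp_pos _) Finset.univ_nonempty

theorem policy_pos (y : Y) : 0 < policy φ θ y :=
  haveI : Nonempty Y := ⟨y⟩
  div_pos (Real.exp_pos _) (sum_exp_inner_pos φ θ)

theorem sum_policy [Nonempty Y] : ∑ y, policy φ θ y = 1 := by
  simp only [policy, ← Finset.sum_div]
  exact div_self (sum_exp_inner_pos φ θ).ne'

theorem log_policy (y : Y) :
    Real.log (policy φ θ y) = ⟪φ y, θ⟫ - Real.log (∑ z, Real.exp ⟪φ z, θ⟫) := by
  have : Nonempty Y := ⟨y⟩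
  rw [policy, Real.log_div (Real.exp_ne_zero _) (sum_exp_inner_pos φ θ).ne', Real.log_exp]

theorem log_policy_sub_log_policy (x y : Y) :
    Real.log (policy φ θ x) - Real.log (policy φ θ y) = ⟪φ x - φ y, θ⟫ := by
  rw [log_policy, log_policy, inner_sub_left]
  ring

theorem policy_div_policy (x y : Y) :
    policy φ θ x / policy φ θ y = Real.exp ⟪φ x - φ y, θ⟫ := by
  rw [← log_policy_sub_log_policy, Real.exp_sub, Real.exp_log (policy_pos φ θ x),
    Real.exp_log (policy_pos φ θ y)]

theorem hasGradientAt_policy (y : Y) :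
    HasGradientAt (fun θ => policy φ θ y)
      (policy φ θ y • (φ y - ∑ z, policy φ θ z • φ z)) θ := by
  have : Nonempty Y := ⟨y⟩
  have hlogit (z : Y) : HasFDerivAt (fun θ => ⟪φ z, θ⟫) (innerSL ℝ (φ z)) θ :=
    (innerSL ℝ (φ z)).hasFDerivAt
  have hlogZ := (HasFDerivAt.fun_sum fun z (_ : z ∈ Finset.univ) => (hlogit z).exp).log
    (sum_exp_inner_pos φ θ).ne'
  have hexp := ((hlogit y).sub hlogZ).exp
  simp only [Pi.sub_apply, ← log_policy, Real.exp_log (policy_pos φ _ y)] at hexp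
  refine hasGradientAt_iff_hasFDerivAt.2 (hexp.congr_fderiv ?_)
  ext v
  simp [policy, Finset.mul_sum, div_eq_inv_mul, mul_assoc]

theorem expReward_lt {c : ℝ} (hle : ∀ y, r y ≤ c) {y₀ : Y} (hlt : r y₀ < c) :
    expReward φ r θ < c := by
  have : Nonempty Y := ⟨y₀⟩
  calc expReward φ r θ < ∑ y, policy φ θ y * c :=
        Finset.sum_lt_sum
          (fun y _ => mul_le_mul_of_nonneg_left (hle y) (policy_pos φ θ y).le)
          ⟨y₀, Finset.mem_univ _, mul_lt_mul_of_pos_left hlt (policy_pos φ θ y₀)⟩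
    _ = c := by rw [← Finset.sum_mul, sum_policy, one_mul]

/-- The advantage `r y - V(θ)` of the output `y` weighted by its probability. It is the coefficient
of `φ y` in the gradient of the expected reward `V`. -/
noncomputable def weightedAdvantage (y : Y) : ℝ :=
  policy φ θ y * (r y - expReward φ r θ)

variable {φ r θ} in
theorem weightedAdvantage_neg {b : Y} (hb : r b < expReward φ r θ) :
    weightedAdvantage φ r θ b < 0 :=
  mul_neg_of_pos_of_neg (policy_pos φ θ b) (sub_neg.2 hb)

theorem sum_weightedAdvantage : ∑ y, weightedAdvantage φ r θ y = 0 := by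
  cases isEmpty_or_nonempty Y
  · exact Fintype.sum_empty _
  · simp only [weightedAdvantage, mul_sub, Finset.sum_sub_distrib, ← Finset.sum_mul, sum_policy,
      one_mul]
    exact sub_self _

theorem sum_weightedAdvantage_nonneg {S : Finset Y} (hS : ∀ y ∉ S, r y ≤ expReward φ r θ) :
    0 ≤ ∑ y ∈ S, weightedAdvantage φ r θ y := by
  classical
  have hcompl : ∑ y ∈ Sᶜ, weightedAdvantage φ r θ y ≤ 0 :=
    Finset.sum_nonpos fun y hy => mul_nonpos_of_nonneg_of_nonpos (policy_pos φ θ y).le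
      (sub_nonpos.2 (hS y (Finset.mem_compl.1 hy)))
  have htotal := (Finset.sum_add_sum_compl S _).trans (sum_weightedAdvantage φ r θ)
  linarith

theorem hasGradientAt_expReward :
    HasGradientAt (expReward φ r) (∑ y, weightedAdvantage φ r θ y • φ y) θ := by
  have hsum := HasFDerivAt.fun_sum fun y (_ : y ∈ Finset.univ) =>
    (hasGradientAt_policy φ θ y).hasFDerivAt.mul_const (r y)
  refine hasGradientAt_iff_hasFDerivAt.2 (hsum.congr_fderiv ?_)
  simp only [← map_smul, ← map_sum]
  congr 1
  calc ∑ y, r y • policy φ θ y • (φ y - ∑ z, policy φ θ z • φ z)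
      = ∑ y, (policy φ θ y * r y) • φ y - expReward φ r θ • ∑ z, policy φ θ z • φ z := by
        simp only [expReward, Finset.sum_smul, ← Finset.sum_sub_distrib, smul_sub, smul_smul,
          mul_comm]
    _ = ∑ y, weightedAdvantage φ r θ y • φ y := by
        simp only [weightedAdvantage, Finset.smul_sum, ← Finset.sum_sub_distrib, smul_smul,
          ← sub_smul, mul_sub, mul_comm]

theorem differentiable_expReward : Differentiable ℝ (expReward φ r) :=
  fun θ => (hasGradientAt_expReward φ r θ).differentiableAt

theorem inner_gradient_expReward (v : EuclideanSpace ℝ (Fin D)) :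
    ⟪v, ∇ (expReward φ r) θ⟫ = ∑ y, weightedAdvantage φ r θ y * ⟪v, φ y⟫ := by
  simp only [(hasGradientAt_expReward φ r θ).gradient, inner_sum, inner_smul_right]

/-- The ratio `ρ` of the weighted advantage of `a` to the weighted disadvantage of `b`; it is
meaningful when the expected reward lies strictly between `r b` and `r a`. -/
noncomputable def advantageRatio (a b : Y) : ℝ :=
  weightedAdvantage φ r θ a / -weightedAdvantage φ r θ b

theorem advantageRatio_eq (a b : Y) :
    advantageRatio φ r θ a b =
      Real.exp ⟪φ a - φ b, θ⟫ * ((r a - expReward φ r θ) / (expReward φ r θ - r b)) := by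
  rw [advantageRatio, weightedAdvantage, weightedAdvantage, ← mul_neg, neg_sub, mul_div_mul_comm,
    policy_div_policy]

variable {φ r}

theorem IsGradientFlow.hasDerivAt_advantageRatio {θ : ℝ → EuclideanSpace ℝ (Fin D)}
    (hθ : IsGradientFlow (expReward φ r) θ) {t : ℝ} (ht : 0 ≤ t) {a b : Y}
    (hb : expReward φ r (θ t) ≠ r b) :
    HasDerivAt (fun u => advantageRatio φ r (θ u) a b)
      (Real.exp ⟪φ a - φ b, θ t⟫ *
        (⟪φ a - φ b, ∇ (expReward φ r) (θ t)⟫ *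
            ((r a - expReward φ r (θ t)) / (expReward φ r (θ t) - r b)) -
          ‖∇ (expReward φ r) (θ t)‖ ^ 2 * (r a - r b) / (expReward φ r (θ t) - r b) ^ 2)) t := by
  have hV := hθ.hasDerivAt_comp ht (differentiable_expReward φ r _)
  have hquot := (hV.const_sub (r a)).fun_div (hV.sub_const (r b)) (sub_ne_zero.2 hb)
  simp only [advantageRatio_eq]
  refine ((hθ.hasDerivAt_inner ht (φ a - φ b)).exp.fun_mul hquot).congr_deriv ?_
  ring

end Policy

section ThreeOutputs

variable {Y : Type*} {D : ℕ} {φ : Y → EuclideanSpace ℝ (Fin D)} {r : Y → ℝ} {a m b : Y}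

/-- The threshold below which `advantageRatio φ r θ a b` forces the odds of `a` against `b` to
decrease. At `θ₀ = C • (φ b - φ a)` it is the ratio of log-probability gaps in the definition of
`ζ`, see `log_policy_gap_ratio`. -/
noncomputable def oddsThreshold (φ : Y → EuclideanSpace ℝ (Fin D)) (a m b : Y) : ℝ :=
  (-⟪φ a, φ m⟫ - ‖φ b‖ ^ 2) / (-⟪φ a, φ m⟫ + ‖φ a‖ ^ 2)

theorem oddsThreshold_pos (hinner : ⟪φ a, φ m⟫ < -‖φ b‖ ^ 2) : 0 < oddsThreshold φ a m b :=
  div_pos (by linarith) (by linarith [sq_nonneg ‖φ a‖, sq_nonneg ‖φ b‖])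

theorem oddsThreshold_lt_one (hinner : ⟪φ a, φ m⟫ < 0) : oddsThreshold φ a m b < 1 := by
  have ha : 0 < ‖φ a‖ ^ 2 := by
    have : φ a ≠ 0 := fun h => by simp [h] at hinner
    positivity
  rw [oddsThreshold, div_lt_one (by linarith)]
  linarith [sq_nonneg ‖φ b‖]

variable [Fintype Y]

theorem weightedAdvantage_add_add_nonneg {θ : EuclideanSpace ℝ (Fin D)}
    (ham : a ≠ m) (hba : b ≠ a) (hbm : b ≠ m)
    (hrest : ∀ y, y ≠ a → y ≠ m → y ≠ b → r y ≤ expReward φ r θ) :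
    0 ≤ weightedAdvantage φ r θ a + weightedAdvantage φ r θ m + weightedAdvantage φ r θ b := by
  classical
  have hsum := sum_weightedAdvantage_nonneg φ r θ (S := {a, m, b}) fun y hy => by
    simp only [Finset.mem_insert, Finset.mem_singleton, not_or] at hy
    exact hrest y hy.1 hy.2.1 hy.2.2
  rwa [Finset.sum_insert (by simp [ham, hba.symm]), Finset.sum_pair hbm.symm, ← add_assoc] at hsum

theorem inner_sub_gradient_expReward (θ : EuclideanSpace ℝ (Fin D)) (ham : a ≠ m)
    (ha_orth : ∀ y, y ≠ a → y ≠ m → ⟪φ a, φ y⟫ = 0) (hb_orth : ∀ y, y ≠ b → ⟪φ b, φ y⟫ = 0) :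
    ⟪φ a - φ b, ∇ (expReward φ r) θ⟫ =
      weightedAdvantage φ r θ a * ‖φ a‖ ^ 2 + weightedAdvantage φ r θ m * ⟪φ a, φ m⟫ -
        weightedAdvantage φ r θ b * ‖φ b‖ ^ 2 := by
  rw [inner_sub_left, inner_gradient_expReward, inner_gradient_expReward,
    Fintype.sum_eq_add a m ham fun y hy => by rw [ha_orth y hy.1 hy.2, mul_zero],
    Fintype.sum_eq_single b fun y hy => by rw [hb_orth y hy, mul_zero],
    real_inner_self_eq_norm_sq, real_inner_self_eq_norm_sq]

theorem inner_sub_gradient_expReward_neg {θ : EuclideanSpace ℝ (Fin D)}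
    (ham : a ≠ m) (hba : b ≠ a) (hbm : b ≠ m)
    (hrest : ∀ y, y ≠ a → y ≠ m → y ≠ b → r y ≤ expReward φ r θ) (hb : r b < expReward φ r θ)
    (ha_orth : ∀ y, y ≠ a → y ≠ m → ⟪φ a, φ y⟫ = 0) (hb_orth : ∀ y, y ≠ b → ⟪φ b, φ y⟫ = 0)
    (hinner : ⟪φ a, φ m⟫ < 0) (hratio : advantageRatio φ r θ a b < oddsThreshold φ a m b) :
    ⟪φ a - φ b, ∇ (expReward φ r) θ⟫ < 0 := by
  have hthreshold : weightedAdvantage φ r θ a * (-⟪φ a, φ m⟫ + ‖φ a‖ ^ 2) <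
      (-⟪φ a, φ m⟫ - ‖φ b‖ ^ 2) * -weightedAdvantage φ r θ b := by
    rwa [advantageRatio, oddsThreshold, div_lt_div_iff₀ (neg_pos.2 (weightedAdvantage_neg hb))
      (by linarith [sq_nonneg ‖φ a‖])] at hratio
  have hsum := mul_nonneg (neg_nonneg.2 hinner.le)
    (weightedAdvantage_add_add_nonneg ham hba hbm hrest)
  rw [inner_sub_gradient_expReward θ ham ha_orth hb_orth]
  linarith

theorem expReward_lt_of_advantageRatio_lt_one {θ : EuclideanSpace ℝ (Fin D)}
    (ham : a ≠ m) (hba : b ≠ a) (hbm : b ≠ m)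
    (hrest : ∀ y, y ≠ a → y ≠ m → y ≠ b → r y ≤ expReward φ r θ) (hb : r b < expReward φ r θ)
    (hratio : advantageRatio φ r θ a b < 1) : expReward φ r θ < r m := by
  rw [advantageRatio, div_lt_one (neg_pos.2 (weightedAdvantage_neg hb))] at hratio
  have hsum := weightedAdvantage_add_add_nonneg ham hba hbm hrest
  have hm : 0 < weightedAdvantage φ r θ m := by linarith
  exact sub_pos.1 (pos_of_mul_pos_right hm (policy_pos φ θ m).le)

theorem expReward_lt_best (θ : EuclideanSpace ℝ (Fin D)) (hbm : r b < r m) (hma : r m < r a)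
    (hrest : ∀ y, y ≠ a → y ≠ m → r y ≤ r b) : expReward φ r θ < r a := by
  refine expReward_lt φ r θ (fun y => ?_) hma
  by_cases hya : y = a
  · rw [hya]
  by_cases hym : y = m
  · rw [hym]; exact hma.le
  · exact (hrest y hya hym).trans (hbm.trans hma).le

theorem IsGradientFlow.advantageRatio_le_initial {θ : ℝ → EuclideanSpace ℝ (Fin D)}
    (hθ : IsGradientFlow (expReward φ r) θ) (hbm : r b < r m) (hma : r m < r a)
    (hrest : ∀ y, y ≠ a → y ≠ m → r y ≤ r b)
    (ha_orth : ∀ y, y ≠ a → y ≠ m → ⟪φ a, φ y⟫ = 0) (hb_orth : ∀ y, y ≠ b → ⟪φ b, φ y⟫ = 0)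
    (hinner : ⟪φ a, φ m⟫ < 0) (hb : ∀ t, 0 ≤ t → r b < expReward φ r (θ t))
    (hratio : advantageRatio φ r (θ 0) a b < oddsThreshold φ a m b) {t : ℝ} (ht : 0 ≤ t) :
    advantageRatio φ r (θ t) a b ≤ advantageRatio φ r (θ 0) a b := by
  refine le_initial_of_hasDerivAt_neg
    (fun u hu => hθ.hasDerivAt_advantageRatio hu (hb u hu).ne') (fun u hu hρ => ?_) ht
  have hVb := sub_pos.2 (hb u hu)
  have hVa := expReward_lt_best (φ := φ) (θ u) hbm hma hrest
  have hodds : ⟪φ a - φ b, ∇ (expReward φ r) (θ u)⟫ < 0 :=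
    inner_sub_gradient_expReward_neg (ne_of_apply_ne r hma.ne')
      (ne_of_apply_ne r (hbm.trans hma).ne) (ne_of_apply_ne r hbm.ne)
      (fun y hya hym _ => (hrest y hya hym).trans (hb u hu).le) (hb u hu) ha_orth hb_orth hinner
      (hρ.trans_lt hratio)
  have hreward :
      0 ≤ ‖∇ (expReward φ r) (θ u)‖ ^ 2 * (r a - r b) / (expReward φ r (θ u) - r b) ^ 2 :=
    div_nonneg (mul_nonneg (sq_nonneg _) (by linarith)) (sq_nonneg _)
  have := mul_neg_of_neg_of_pos hodds (div_pos (sub_pos.2 hVa) hVb)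
  exact mul_neg_of_pos_of_neg (Real.exp_pos _) (by linarith)

theorem IsGradientFlow.expReward_lt_of_advantageRatio_lt {θ : ℝ → EuclideanSpace ℝ (Fin D)}
    (hθ : IsGradientFlow (expReward φ r) θ) (hbm : r b < r m) (hma : r m < r a)
    (hrest : ∀ y, y ≠ a → y ≠ m → r y ≤ r b)
    (ha_orth : ∀ y, y ≠ a → y ≠ m → ⟪φ a, φ y⟫ = 0) (hb_orth : ∀ y, y ≠ b → ⟪φ b, φ y⟫ = 0)
    (hinner : ⟪φ a, φ m⟫ < 0) (hb₀ : r b < expReward φ r (θ 0))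
    (hratio : advantageRatio φ r (θ 0) a b < oddsThreshold φ a m b) {t : ℝ} (ht : 0 ≤ t) :
    expReward φ r (θ t) < r m := by
  have hb : ∀ u, 0 ≤ u → r b < expReward φ r (θ u) := fun u hu =>
    hb₀.trans_le (hθ.monotoneOn (differentiable_expReward φ r) Set.self_mem_Ici hu hu)
  refine expReward_lt_of_advantageRatio_lt_one (ne_of_apply_ne r hma.ne')
    (ne_of_apply_ne r (hbm.trans hma).ne) (ne_of_apply_ne r hbm.ne)
    (fun y hya hym _ => (hrest y hya hym).trans (hb t ht).le) (hb t ht) ?_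
  calc advantageRatio φ r (θ t) a b ≤ advantageRatio φ r (θ 0) a b :=
        hθ.advantageRatio_le_initial hbm hma hrest ha_orth hb_orth hinner hb hratio ht
    _ < oddsThreshold φ a m b := hratio
    _ < 1 := oddsThreshold_lt_one hinner

theorem inner_lt_neg_norm_sq_of_policy_lt {C : ℝ} (hC : 0 < C) (hba : ⟪φ b, φ a⟫ = 0)
    (hbm : ⟪φ b, φ m⟫ = 0)
    (hlt : policy φ (C • (φ b - φ a)) b < policy φ (C • (φ b - φ a)) m) :
    ⟪φ a, φ m⟫ < -‖φ b‖ ^ 2 := by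
  have hlog := sub_pos.2 (Real.log_lt_log (policy_pos φ _ b) hlt)
  rw [log_policy_sub_log_policy, inner_sub_smul_sub C hba hbm] at hlog
  linarith [pos_of_mul_pos_right hlog hC.le]

theorem log_policy_gap_ratio {C : ℝ} (hC : C ≠ 0) (hba : ⟪φ b, φ a⟫ = 0) (hbm : ⟪φ b, φ m⟫ = 0) :
    (Real.log (policy φ (C • (φ b - φ a)) m) - Real.log (policy φ (C • (φ b - φ a)) b)) /
        (Real.log (policy φ (C • (φ b - φ a)) m) - Real.log (policy φ (C • (φ b - φ a)) a)) =
      oddsThreshold φ a m b := by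
  have hma : ⟪φ m - φ a, C • (φ b - φ a)⟫ = C * (-⟪φ a, φ m⟫ + ‖φ a‖ ^ 2) := by
    rw [← sub_add_sub_cancel (φ m) (φ b) (φ a), inner_add_left, inner_sub_smul_sub C hba hbm,
      inner_smul_right, real_inner_self_eq_norm_sq, norm_sub_sq_real, hba]
    ring
  rw [log_policy_sub_log_policy, log_policy_sub_log_policy, inner_sub_smul_sub C hba hbm, hma,
    mul_div_mul_left _ _ hC, oddsThreshold]

theorem advantageRatio_smul_sub (C : ℝ) :
    advantageRatio φ r (C • (φ b - φ a)) a b =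
      Real.exp (-(C * ‖φ b - φ a‖ ^ 2)) *
        ((r a - expReward φ r (C • (φ b - φ a))) / (expReward φ r (C • (φ b - φ a)) - r b)) := by
  rw [advantageRatio_eq, ← neg_sub (φ b) (φ a), inner_neg_left, inner_smul_right,
    real_inner_self_eq_norm_sq]

theorem advantageRatio_smul_sub_lt {C ζ : ℝ} (hba : φ b ≠ φ a)
    (hVb : r b < expReward φ r (C • (φ b - φ a))) (hVa : expReward φ r (C • (φ b - φ a)) < r a)
    (hζ : ζ = oddsThreshold φ a m b * ((expReward φ r (C • (φ b - φ a)) - r b) /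
      (r a - expReward φ r (C • (φ b - φ a)))))
    (hζpos : 0 < ζ) (hC : -Real.log ζ / ‖φ b - φ a‖ ^ 2 < C) :
    advantageRatio φ r (C • (φ b - φ a)) a b < oddsThreshold φ a m b := by
  have hb := sub_pos.2 hVb
  have ha := sub_pos.2 hVa
  have hexp : Real.exp (-(C * ‖φ b - φ a‖ ^ 2)) < ζ := by
    have hnorm := norm_pos_iff.2 (sub_ne_zero.2 hba)
    rw [div_lt_iff₀ (by positivity)] at hC
    rw [← Real.lt_log_iff_exp_lt hζpos]
    linarith
  rw [advantageRatio_smul_sub, ← lt_div_iff₀ (div_pos ha hb), div_div_eq_mul_div, ← mul_div, ← hζ]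
  exact hexp

end ThreeOutputs

theorem neg_inner_product_fail_general {Y : Type*} [Fintype Y] {D : ℕ}
    (φ : Y → EuclideanSpace ℝ (Fin D)) (rG : Y → ℝ) (ystar ymed ybad : Y)
    (hbm : rG ybad < rG ymed) (hms : rG ymed < rG ystar)
    (hrest : ∀ y, y ≠ ystar → y ≠ ymed → rG y ≤ rG ybad)
    (hstar_orth : ∀ y, y ≠ ystar → y ≠ ymed → ⟪φ ystar, φ y⟫ = 0)
    (hbad_orth : ∀ y, y ≠ ybad → ⟪φ ybad, φ y⟫ = 0)
    (θt : ℝ → EuclideanSpace ℝ (Fin D)) (hflow : IsGradientFlow (expReward φ rG) θt)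
    (hmed : policy φ (θt 0) ybad < policy φ (θt 0) ymed)
    (C ζ : ℝ)
    (hζ : ζ = (Real.log (policy φ (θt 0) ymed) - Real.log (policy φ (θt 0) ybad))
          / (Real.log (policy φ (θt 0) ymed) - Real.log (policy φ (θt 0) ystar))
          * ((expReward φ rG (θt 0) - rG ybad) / (rG ystar - expReward φ rG (θt 0))))
    (hζpos : 0 < ζ)
    (hC : max 0 (-Real.log ζ / ‖φ ybad - φ ystar‖ ^ 2) < C)
    (hθ0 : θt 0 = C • (φ ybad - φ ystar)) :
    ∀ t : ℝ, 0 ≤ t → expReward φ rG (θt t) < rG ymed := by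
  have hC0 : 0 < C := (le_max_left _ _).trans_lt hC
  have hVa := expReward_lt_best (φ := φ) (θt 0) hbm hms hrest
  have hbad_star : ⟪φ ybad, φ ystar⟫ = 0 := hbad_orth ystar (ne_of_apply_ne rG (hbm.trans hms).ne')
  have hbad_med : ⟪φ ybad, φ ymed⟫ = 0 := hbad_orth ymed (ne_of_apply_ne rG hbm.ne')
  rw [hθ0] at hζ hmed hVa
  have hinner := inner_lt_neg_norm_sq_of_policy_lt hC0 hbad_star hbad_med hmed
  have hstar_med : ⟪φ ystar, φ ymed⟫ < 0 := hinner.trans_le (neg_nonpos.2 (sq_nonneg _))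
  rw [log_policy_gap_ratio hC0.ne' hbad_star hbad_med] at hζ
  have hVb : rG ybad < expReward φ rG (C • (φ ybad - φ ystar)) := by
    have hquot := pos_of_mul_pos_right (hζ ▸ hζpos) (oddsThreshold_pos hinner).le
    exact sub_pos.1 ((div_pos_iff_of_pos_right (sub_pos.2 hVa)).1 hquot)
  have hne : φ ybad ≠ φ ystar := fun h => hstar_med.ne (h ▸ hbad_med)
  have hratio := advantageRatio_smul_sub_lt hne hVb hVa hζ hζpos ((le_max_right _ _).trans_lt hC)
  rw [← hθ0] at hVb hratio
  exact fun t ht => hflow.expReward_lt_of_advantageRatio_lt hbm hms hrest hstar_orth hbad_orth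
    hstar_med hVb hratio ht

theorem neg_inner_product_fail {Y : Type*} [Fintype Y] {D : ℕ}
    (φ : Y → EuclideanSpace ℝ (Fin D)) (hφ : ∀ y, φ y ≠ 0)
    (rG : Y → ℝ) (hrG : ∀ y, rG y ∈ Set.Icc (-1 : ℝ) 1)
    (ystar ymed ybad : Y) (Ybad : Finset Y) (hybad : ybad ∈ Ybad)
    (hsm : ystar ≠ ymed) (hsb : ystar ∉ Ybad) (hmb : ymed ∉ Ybad)
    (hcover : ∀ y : Y, y = ystar ∨ y = ymed ∨ y ∈ Ybad)
    (hr1 : rG ymed < rG ystar) (hr2 : 0 < rG ymed)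
    (hr3 : ∀ y ∈ Ybad, rG y ≤ 0)
    (hr4 : ∀ y ∈ Ybad, rG y = rG ybad)
    (Δ1 Δ2 : ℝ) (hΔ1 : Δ1 = rG ystar - rG ymed) (hΔ2 : Δ2 = rG ymed - rG ybad)
    (s : ℝ) (hs : s = ⟪φ ystar, φ ymed⟫) (hsneg : s < 0)
    (horthbad : ∀ yb ∈ Ybad, ∀ y : Y, y ≠ yb → ⟪φ yb, φ y⟫ = 0)
    (hnormbad : ∀ yb ∈ Ybad, ‖φ yb‖ ≤ ‖φ ymed‖)
    (θt : ℝ → EuclideanSpace ℝ (Fin D))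
    (hflow : ∀ t : ℝ, 0 ≤ t → HasDerivAt θt (gradient (expReward φ rG) (θt t)) t)
    (hmax : ∀ y : Y, y ≠ ymed → policy φ (θt 0) y < policy φ (θt 0) ymed)
    (hsmall : policy φ (θt 0) ystar ≤ Δ2 * (∑ y ∈ Ybad, policy φ (θt 0) y) / Δ1)
    (C ζ : ℝ)
    (hζ : ζ = (Real.log (policy φ (θt 0) ymed) - Real.log (policy φ (θt 0) ybad))
          / (Real.log (policy φ (θt 0) ymed) - Real.log (policy φ (θt 0) ystar))
          * ((expReward φ rG (θt 0) - rG ybad) / (rG ystar - expReward φ rG (θt 0))))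
    (hζpos : 0 < ζ)
    (hC : max 0 (-Real.log ζ / ‖φ ybad - φ ystar‖ ^ 2) < C)
    (hθ0 : θt 0 = C • (φ ybad - φ ystar)) :
    ∀ t : ℝ, 0 ≤ t → expReward φ rG (θt t) < rG ymed := by
  have hother : ∀ y, y ≠ ystar → y ≠ ymed → y ∈ Ybad := fun y hys hym =>
    ((hcover y).resolve_left hys).resolve_left hym
  exact neg_inner_product_fail_general φ rG ystar ymed ybad ((hr3 ybad hybad).trans_lt hr2) hr1
    (fun y hys hym => (hr4 y (hother y hys hym)).le)
    (fun y hys hym => (real_inner_comm _ _).trans (horthbad y (hother y hys hym) ystar hys.symm))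
    (horthbad ybad hybad) θt hflow (hmax ybad fun h => hmb (h ▸ hybad)) C ζ hζ hζpos hC hθ0
end

section
/- Let r_G : Y → [-1, 1] be a reward function and B = max_{y∈Y} ‖φ(y)‖. Then the gradient of the expected reward V_G is 6B²-Lipschitz: for any θ, θ' ∈ ℝ^D, ‖∇V_G(θ) − ∇V_G(θ')‖ ≤ 6 B² ‖θ − θ'‖. -/
open scoped BigOperators RealInnerProductSpace

/-!
Regard the expected value of a function `f` under the softmax distribution as a function of the
score vector `s : Y → ℝ`, with the sup norm on scores. Its derivative at `s` is the covariance of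
`f` with the coordinates of the scores, `𝔼[coord ⊗ f] - 𝔼[coord] ⊗ 𝔼[f]`. If `‖f‖ ≤ C`, this has
norm at most `2 * C`, so the softmax mean of `f` is `2 * C`-Lipschitz. The covariance is itself
built from three softmax means, and the variation of each contributes `2 * C`, so it is
`6 * C`-Lipschitz. The scores `⟪φ y, θ⟫` depend on `θ` through a linear map of norm at most `B`,
which enters once through the chain rule and once through the argument of the covariance: hence
the factor `B ^ 2`.
-/

lemma norm_smulRight_sub_smulRight_le {𝕜 E F : Type*} [NontriviallyNormedField 𝕜]
    [SeminormedAddCommGroup E] [NormedSpace 𝕜 E] [SeminormedAddCommGroup F] [NormedSpace 𝕜 F]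
    (c c' : StrongDual 𝕜 E) (x x' : F) :
    ‖c.smulRight x - c'.smulRight x'‖ ≤ ‖c - c'‖ * ‖x‖ + ‖c'‖ * ‖x - x'‖ := by
  have split : c.smulRight x - c'.smulRight x' =
      (c - c').smulRight x + c'.smulRight (x - x') := by
    ext v
    simp [sub_smul, smul_sub]
  rw [split, ← ContinuousLinearMap.norm_smulRight_apply (c - c'),
    ← ContinuousLinearMap.norm_smulRight_apply c']
  exact norm_add_le _ _

section Softmax

/-- The evaluation functional `s ↦ s y` on score vectors. -/
abbrev scoreCoord {Y : Type*} (y : Y) : (Y → ℝ) →L[ℝ] ℝ :=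
  ContinuousLinearMap.proj y

variable {Y : Type*} [Fintype Y]

/-- The softmax distribution on `Y` with score vector `s`. The policy `policy φ θ` is the case
`s y = ⟪φ y, θ⟫`. -/
noncomputable def softmax (s : Y → ℝ) (y : Y) : ℝ :=
  Real.exp (s y) / ∑ z, Real.exp (s z)

/-- The mean of `f` under the softmax distribution, as a function of the score vector `s`. It is
vector-valued so as to cover both the expected reward and the means that occur in its
derivative. -/
noncomputable def softmaxMean {F : Type*} [AddCommMonoid F] [Module ℝ F] (f : Y → F)
    (s : Y → ℝ) : F :=
  ∑ y, softmax s y • f y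

variable {F : Type*} [NormedAddCommGroup F] [NormedSpace ℝ F]

/-- The covariance of the score coordinates with `f` under the softmax distribution, encoded as
the linear map sending `v : Y → ℝ` to `𝔼[v • f] - 𝔼[v] • 𝔼[f]`. -/
noncomputable def softmaxCov (f : Y → F) (s : Y → ℝ) : (Y → ℝ) →L[ℝ] F :=
  softmaxMean (fun y => (scoreCoord y).smulRight (f y)) s -
    (softmaxMean scoreCoord s).smulRight (softmaxMean f s)

lemma softmax_nonneg (s : Y → ℝ) (y : Y) : 0 ≤ softmax s y :=
  div_nonneg (Real.exp_nonneg _) (Finset.sum_nonneg fun _ _ => Real.exp_nonneg _)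

lemma softmaxMean_scoreCoord_apply (s v : Y → ℝ) :
    softmaxMean scoreCoord s v = softmaxMean v s := by
  simp [softmaxMean, sum_apply]

lemma softmaxCov_apply (f : Y → F) (s v : Y → ℝ) :
    softmaxCov f s v =
      softmaxMean (fun y => v y • f y) s - softmaxMean v s • softmaxMean f s := by
  rw [← softmaxMean_scoreCoord_apply]
  simp [softmaxCov, softmaxMean, sum_apply]

lemma norm_scoreCoord_le_one (y : Y) : ‖scoreCoord y‖ ≤ 1 :=
  ContinuousLinearMap.opNorm_le_bound _ zero_le_one fun v => by
    simpa using norm_le_pi_norm v y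

lemma norm_scoreCoord_smulRight_le {f : Y → F} {C : ℝ} (hf : ∀ y, ‖f y‖ ≤ C) (y : Y) :
    ‖(scoreCoord y).smulRight (f y)‖ ≤ C := by
  rw [ContinuousLinearMap.norm_smulRight_apply]
  exact (mul_le_of_le_one_left (norm_nonneg _) (norm_scoreCoord_le_one y)).trans (hf y)

variable [Nonempty Y]

lemma sum_exp_pos (s : Y → ℝ) : 0 < ∑ z, Real.exp (s z) :=
  Finset.sum_pos (fun _ _ => Real.exp_pos _) Finset.univ_nonempty

lemma sum_softmax (s : Y → ℝ) : ∑ y, softmax s y = 1 := by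
  simp only [softmax, ← Finset.sum_div, div_self (sum_exp_pos s).ne']

lemma norm_softmaxMean_le {f : Y → F} {C : ℝ} (hf : ∀ y, ‖f y‖ ≤ C) (s : Y → ℝ) :
    ‖softmaxMean f s‖ ≤ C := by
  rw [← mem_closedBall_zero_iff]
  exact (convex_closedBall 0 C).sum_mem (fun y _ => softmax_nonneg s y) (sum_softmax s)
    fun y _ => mem_closedBall_zero_iff.2 (hf y)

lemma hasFDerivAt_softmax (s : Y → ℝ) (y : Y) :
    HasFDerivAt (fun t => softmax t y)
      (softmax s y • (scoreCoord y - softmaxMean scoreCoord s)) s := by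
  have hexp (z : Y) : HasFDerivAt (fun t : Y → ℝ => Real.exp (t z))
      (Real.exp (s z) • scoreCoord z) s :=
    (hasFDerivAt_apply z s).exp
  have hsum := HasFDerivAt.fun_sum fun z (_ : z ∈ Finset.univ) => hexp z
  have hZ := (sum_exp_pos s).ne'
  have hdiv := (hexp y).fun_mul ((hasDerivAt_inv hZ).comp_hasFDerivAt s hsum)
  simp only [softmax, div_eq_mul_inv]
  refine hdiv.congr_fderiv ?_
  ext v
  have hmean : softmaxMean v s = (∑ z, Real.exp (s z) * v z) / ∑ z, Real.exp (s z) := by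
    simp only [softmaxMean, softmax, smul_eq_mul, Finset.sum_div, div_mul_eq_mul_div]
  simp only [add_apply, sub_apply, neg_apply, smul_apply, sum_apply, neg_smul, smul_neg,
    smul_eq_mul, Function.comp_apply, ContinuousLinearMap.proj_apply,
    softmaxMean_scoreCoord_apply, hmean]
  field_simp
  ring

lemma hasFDerivAt_softmaxMean (f : Y → F) (s : Y → ℝ) :
    HasFDerivAt (softmaxMean f) (softmaxCov f s) s := by
  have hsum := HasFDerivAt.fun_sum fun y (_ : y ∈ Finset.univ) =>
    (hasFDerivAt_softmax s y).smul_const (f y)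
  refine hsum.congr_fderiv ?_
  ext v
  simp only [softmaxCov_apply, sum_apply, ContinuousLinearMap.smulRight_apply, smul_apply,
    sub_apply, softmaxMean_scoreCoord_apply]
  simp only [softmaxMean, Finset.smul_sum, ← Finset.sum_sub_distrib]
  refine Finset.sum_congr rfl fun y _ => ?_
  simp only [ContinuousLinearMap.proj_apply, smul_eq_mul]
  module

lemma norm_softmaxCov_le {f : Y → F} {C : ℝ} (hf : ∀ y, ‖f y‖ ≤ C) (s : Y → ℝ) :
    ‖softmaxCov f s‖ ≤ 2 * C := by
  have hmean : ‖(softmaxMean scoreCoord s).smulRight (softmaxMean f s)‖ ≤ C := by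
    rw [ContinuousLinearMap.norm_smulRight_apply, ← one_mul C]
    gcongr
    · exact norm_softmaxMean_le norm_scoreCoord_le_one s
    · exact norm_softmaxMean_le hf s
  calc ‖softmaxCov f s‖ ≤ C + C :=
        norm_sub_le_of_le (norm_softmaxMean_le (norm_scoreCoord_smulRight_le hf) s) hmean
    _ = 2 * C := (two_mul C).symm

lemma norm_softmaxMean_sub_le {f : Y → F} {C : ℝ} (hf : ∀ y, ‖f y‖ ≤ C) (s s' : Y → ℝ) :
    ‖softmaxMean f s - softmaxMean f s'‖ ≤ 2 * C * ‖s - s'‖ :=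
  convex_univ.norm_image_sub_le_of_norm_hasFDerivWithin_le
    (fun t _ => (hasFDerivAt_softmaxMean f t).hasFDerivWithinAt)
    (fun t _ => norm_softmaxCov_le hf t) (Set.mem_univ s') (Set.mem_univ s)

lemma norm_softmaxCov_sub_le {f : Y → F} {C : ℝ} (hf : ∀ y, ‖f y‖ ≤ C) (s s' : Y → ℝ) :
    ‖softmaxCov f s - softmaxCov f s'‖ ≤ 6 * C * ‖s - s'‖ := by
  let P : (Y → ℝ) → (Y → ℝ) →L[ℝ] F :=
    softmaxMean fun y => (scoreCoord y).smulRight (f y)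
  let m : (Y → ℝ) → (Y → ℝ) →L[ℝ] ℝ := softmaxMean scoreCoord
  have hP : ‖P s - P s'‖ ≤ 2 * C * ‖s - s'‖ :=
    norm_softmaxMean_sub_le (norm_scoreCoord_smulRight_le hf) s s'
  have hm : ‖m s - m s'‖ ≤ 2 * 1 * ‖s - s'‖ := norm_softmaxMean_sub_le norm_scoreCoord_le_one s s'
  have hm' : ‖m s'‖ ≤ 1 := norm_softmaxMean_le norm_scoreCoord_le_one s'
  calc ‖softmaxCov f s - softmaxCov f s'‖
      = ‖(P s - P s') -
          ((m s).smulRight (softmaxMean f s) - (m s').smulRight (softmaxMean f s'))‖ := by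
        rw [softmaxCov, softmaxCov, sub_sub_sub_comm]
    _ ≤ ‖P s - P s'‖ + (‖m s - m s'‖ * ‖softmaxMean f s‖ +
          ‖m s'‖ * ‖softmaxMean f s - softmaxMean f s'‖) :=
        norm_sub_le_of_le le_rfl (norm_smulRight_sub_smulRight_le _ _ _ _)
    _ ≤ 2 * C * ‖s - s'‖ + (2 * 1 * ‖s - s'‖ * C + 1 * (2 * C * ‖s - s'‖)) := by
        gcongr
        · exact norm_softmaxMean_le hf s
        · exact norm_softmaxMean_sub_le hf s s'
    _ = 6 * C * ‖s - s'‖ := by ring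

lemma norm_fderiv_softmaxMean_comp_sub_le {E : Type*} [NormedAddCommGroup E] [NormedSpace ℝ E]
    (L : E →L[ℝ] Y → ℝ) {f : Y → F} {C : ℝ} (hf : ∀ y, ‖f y‖ ≤ C) (θ θ' : E) :
    ‖fderiv ℝ (softmaxMean f ∘ L) θ - fderiv ℝ (softmaxMean f ∘ L) θ'‖ ≤
      6 * C * ‖L‖ ^ 2 * ‖θ - θ'‖ := by
  have hfderiv (t : E) : fderiv ℝ (softmaxMean f ∘ L) t = (softmaxCov f (L t)).comp L :=
    ((hasFDerivAt_softmaxMean f (L t)).comp t L.hasFDerivAt).fderiv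
  have hC : 0 ≤ C := (norm_nonneg _).trans (hf (Classical.arbitrary Y))
  calc ‖fderiv ℝ (softmaxMean f ∘ L) θ - fderiv ℝ (softmaxMean f ∘ L) θ'‖
      = ‖(softmaxCov f (L θ) - softmaxCov f (L θ')).comp L‖ := by
        rw [hfderiv, hfderiv, ContinuousLinearMap.sub_comp]
    _ ≤ ‖softmaxCov f (L θ) - softmaxCov f (L θ')‖ * ‖L‖ :=
        ContinuousLinearMap.opNorm_comp_le _ _
    _ ≤ 6 * C * ‖L θ - L θ'‖ * ‖L‖ := by
        gcongr
        exact norm_softmaxCov_sub_le hf _ _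
    _ ≤ 6 * C * (‖L‖ * ‖θ - θ'‖) * ‖L‖ := by
        gcongr
        rw [← map_sub]
        exact L.le_opNorm _
    _ = 6 * C * ‖L‖ ^ 2 * ‖θ - θ'‖ := by ring

end Softmax

theorem gradient_lipschitz_general {Y E : Type*} [Fintype Y] [Nonempty Y]
    [NormedAddCommGroup E] [InnerProductSpace ℝ E] [CompleteSpace E]
    {φ : Y → E} {r : Y → ℝ} {B C : ℝ} (hφ : ∀ y, ‖φ y‖ ≤ B) (hr : ∀ y, ‖r y‖ ≤ C) (θ θ' : E) :
    ‖gradient (fun t => softmaxMean r fun y => ⟪φ y, t⟫) θ -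
        gradient (fun t => softmaxMean r fun y => ⟪φ y, t⟫) θ'‖ ≤
      6 * C * B ^ 2 * ‖θ - θ'‖ := by
  let scores : E →L[ℝ] Y → ℝ := ContinuousLinearMap.pi fun y => innerSL ℝ (φ y)
  have hB : 0 ≤ B := (norm_nonneg _).trans (hφ (Classical.arbitrary Y))
  have hC : 0 ≤ C := (norm_nonneg _).trans (hr (Classical.arbitrary Y))
  have hscores : ‖scores‖ ≤ B :=
    ContinuousLinearMap.opNorm_le_bound _ hB fun t =>
      (pi_norm_le_iff_of_nonneg (by positivity)).2 fun y =>
        (norm_inner_le_norm (φ y) t).trans (by gcongr; exact hφ y)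
  calc ‖gradient (softmaxMean r ∘ scores) θ - gradient (softmaxMean r ∘ scores) θ'‖
      = ‖fderiv ℝ (softmaxMean r ∘ scores) θ - fderiv ℝ (softmaxMean r ∘ scores) θ'‖ := by
        rw [gradient, gradient, ← map_sub, LinearIsometryEquiv.norm_map]
    _ ≤ 6 * C * ‖scores‖ ^ 2 * ‖θ - θ'‖ := norm_fderiv_softmaxMean_comp_sub_le scores hr θ θ'
    _ ≤ 6 * C * B ^ 2 * ‖θ - θ'‖ := by gcongr

lemma expReward_eq_softmaxMean {Y : Type*} [Fintype Y] {D : ℕ}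
    (φ : Y → EuclideanSpace ℝ (Fin D)) (r : Y → ℝ) :
    expReward φ r = fun θ => softmaxMean r fun y => ⟪φ y, θ⟫ :=
  rfl

theorem gradient_lipschitz {Y : Type*} [Fintype Y] [Nonempty Y] {D : ℕ}
    (φ : Y → EuclideanSpace ℝ (Fin D)) (hφ : ∀ y, φ y ≠ 0)
    (rG : Y → ℝ) (hrG : ∀ y, rG y ∈ Set.Icc (-1 : ℝ) 1)
    (B : ℝ) (hB : B = Finset.univ.sup' Finset.univ_nonempty fun y => ‖φ y‖)
    (θ θ' : EuclideanSpace ℝ (Fin D)) :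
    ‖gradient (expReward φ rG) θ - gradient (expReward φ rG) θ'‖
      ≤ 6 * B ^ 2 * ‖θ - θ'‖ := by
  have hφB (y : Y) : ‖φ y‖ ≤ B := hB ▸ Finset.le_sup' (fun y => ‖φ y‖) (Finset.mem_univ y)
  simpa [expReward_eq_softmaxMean] using
    gradient_lipschitz_general hφB (fun y => abs_le.2 (hrG y)) θ θ'
end
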